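/- arXiv:1110.0688 — 2 statements merged into one kernel-verified Lean document; each statement's English description precedes it below -/
import Mathlib

section
/- For every integer m ≥ 1 there exists a constant C_m > 0 such that for all λ ∈ (0,1] and all p ∈ ℝ with |p| > λ^{-1}, one has ∫_{|p'| ≤ λ^{-1}} (λ^{-1} − |p'|)^m J_λ(p,p') dp' ≤ C_m · ∫_{|p'| ≤ λ^{-1}} J_λ(p,p') dp'. -/
open MeasureTheory Real

/-- Standard Gaussian density. -/
noncomputable def gauss (q : ℝ) : ℝ := (Real.sqrt (2 * Real.pi))⁻¹ * Real.exp (-q ^ 2 / 2)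

/-- The constant η = (1/16)·√(π/2). -/
noncomputable def eta : ℝ := (1 / 16) * Real.sqrt (Real.pi / 2)

/-- Collision jump-rate kernel. -/
noncomputable def Jker (lam p p' : ℝ) : ℝ :=
  (eta * (1 + lam) / 2) * |p' - p| * gauss (((1 - lam) / 2) * p' - ((1 + lam) / 2) * p)

/-!
Suppose `t * f' t ≤ (a - c * t) * f t` on `[0, R]`, that is, `f t / (t ^ a * exp (-c * t))` is
decreasing when `f > 0`. Integrating `(t ^ (n + 1) * f t)'` over `[0, R]` bounds the moment of order
`n + 1` of `f` by `(a + 1 + n) / c` times the moment of order `n`, so the moments of `f` relative to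
its mass are at most those of the Gamma density `t ^ a * exp (-c * t)`.

By the symmetry `J_λ(-p, -p') = J_λ(p, p')` we may take `p ≥ λ⁻¹`. Put `f t = J_λ(p, λ⁻¹ - t)`, so
that `t` is the distance to the endpoint nearest to `p`. With `q = λ⁻¹ - t`, the factor `p - q ≥ t`
contributes at most `1` to `t * f' t / f t`, and the Gaussian contributes `-t * (1 - λ) / 2 * u`,
where `u = (1 + λ) / 2 * p - (1 - λ) / 2 * q ≥ 1`: thus `a = 1` and `c = (1 - λ) / 2`. This is
uniform for `λ ≤ 1 / 2`, while for `λ ≥ 1 / 2` the weight `(λ⁻¹ - |q|) ^ m` is at most `2 ^ m`.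
-/

section GammaComparison

variable {f f' : ℝ → ℝ} {a c R : ℝ}

theorem mul_integral_pow_succ_mul_le (hR : 0 ≤ R) (hf : ContinuousOn f (Set.Icc 0 R))
    (hfR : 0 ≤ f R) (hderiv : ∀ t ∈ Set.Ioo 0 R, HasDerivAt f (f' t) t)
    (hle : ∀ t ∈ Set.Ioo 0 R, t * f' t ≤ (a - c * t) * f t) (n : ℕ) :
    c * ∫ t in 0..R, t ^ (n + 1) * f t ≤ (a + 1 + n) * ∫ t in 0..R, t ^ n * f t := by
  have hcont (k : ℕ) : ContinuousOn (fun t ↦ t ^ k * f t) (Set.Icc 0 R) := by fun_prop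
  have hint (k : ℕ) : IntervalIntegrable (fun t ↦ t ^ k * f t) volume 0 R :=
    (hcont k).intervalIntegrable_of_Icc hR
  have hderiv_pow_mul (t : ℝ) (ht : t ∈ Set.Ioo 0 R) :
      HasDerivAt (fun t ↦ t ^ (n + 1) * f t) ((n + 1) * t ^ n * f t + t ^ (n + 1) * f' t) t := by
    simpa using (hasDerivAt_pow (n + 1) t).fun_mul (hderiv t ht)
  have hderiv_le (t : ℝ) (ht : t ∈ Set.Ioo 0 R) :
      (n + 1) * t ^ n * f t + t ^ (n + 1) * f' t ≤
        (a + 1 + n) * (t ^ n * f t) - c * (t ^ (n + 1) * f t) := by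
    have := mul_le_mul_of_nonneg_left (hle t ht) (pow_nonneg ht.1.le n)
    linear_combination this
  have hboundary : 0 ≤ R ^ (n + 1) * f R := by positivity
  have hftc := intervalIntegral.sub_le_integral_of_hasDeriv_right_of_le hR (hcont (n + 1))
    (fun t ht ↦ (hderiv_pow_mul t ht).hasDerivWithinAt)
    (((hcont n).const_mul _).fun_sub ((hcont (n + 1)).const_mul _)).integrableOn_Icc hderiv_le
  rw [intervalIntegral.integral_sub ((hint n).const_mul _) ((hint (n + 1)).const_mul _),
    intervalIntegral.integral_const_mul, intervalIntegral.integral_const_mul] at hftc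
  simp only [zero_pow n.succ_ne_zero, zero_mul, sub_zero] at hftc
  linarith

theorem integral_pow_mul_le_Gamma_mul (ha : -1 < a) (hc : 0 < c) (hR : 0 ≤ R)
    (hf : ContinuousOn f (Set.Icc 0 R)) (hfR : 0 ≤ f R)
    (hderiv : ∀ t ∈ Set.Ioo 0 R, HasDerivAt f (f' t) t)
    (hle : ∀ t ∈ Set.Ioo 0 R, t * f' t ≤ (a - c * t) * f t) (n : ℕ) :
    ∫ t in 0..R, t ^ n * f t ≤
      Gamma (a + 1 + n) / (Gamma (a + 1) * c ^ n) * ∫ t in 0..R, f t := by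
  have hΓ : 0 < Gamma (a + 1) := Gamma_pos_of_pos (by linarith)
  induction n with
  | zero => simp [hΓ.ne']
  | succ n ih =>
    have hs : 0 < a + 1 + n := by linarith [n.cast_nonneg (α := ℝ)]
    calc ∫ t in 0..R, t ^ (n + 1) * f t
        ≤ (a + 1 + n) / c * ∫ t in 0..R, t ^ n * f t := by
          rw [div_mul_eq_mul_div, le_div_iff₀' hc]
          exact mul_integral_pow_succ_mul_le hR hf hfR hderiv hle n
      _ ≤ (a + 1 + n) / c *
            (Gamma (a + 1 + n) / (Gamma (a + 1) * c ^ n) * ∫ t in 0..R, f t) := by gcongr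
      _ = Gamma (a + 1 + (n + 1 : ℕ)) / (Gamma (a + 1) * c ^ (n + 1)) * ∫ t in 0..R, f t := by
          rw [Nat.cast_succ, ← add_assoc, Gamma_add_one hs.ne', pow_succ']
          field_simp

end GammaComparison

theorem setIntegral_abs_le_eq_intervalIntegral {E : Type*} [NormedAddCommGroup E]
    [NormedSpace ℝ E] {L : ℝ} (hL : 0 ≤ L) (f : ℝ → E) :
    ∫ x in {x : ℝ | |x| ≤ L}, f x = ∫ x in -L..L, f x := by
  have hset : {x : ℝ | |x| ≤ L} = Set.Icc (-L) L := by
    ext x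
    simp only [Set.mem_ofPred_eq, Set.mem_Icc, abs_le]
  rw [hset, integral_Icc_eq_integral_Ioc, intervalIntegral.integral_of_le (by linarith)]

theorem gauss_pos (x : ℝ) : 0 < gauss x := by
  unfold gauss
  positivity

theorem gauss_neg (x : ℝ) : gauss (-x) = gauss x := by
  simp only [gauss, neg_sq]

theorem hasDerivAt_gauss (x : ℝ) : HasDerivAt gauss (-x * gauss x) x := by
  have hexponent : HasDerivAt (fun x : ℝ ↦ -x ^ 2 / 2) (-x) x :=
    ((hasDerivAt_pow 2 x).neg.div_const 2).congr_deriv (by ring)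
  exact (hexponent.exp.const_mul _).congr_deriv (by unfold gauss; ring)

theorem continuous_gauss : Continuous gauss :=
  continuous_iff_continuousAt.2 fun x ↦ (hasDerivAt_gauss x).continuousAt

section CollisionKernel

variable {lam p q : ℝ}

theorem Jker_nonneg (hlam : -1 ≤ lam) (p q : ℝ) : 0 ≤ Jker lam p q := by
  have hcoeff : 0 ≤ eta * (1 + lam) / 2 := by
    have : 0 ≤ 1 + lam := by linarith
    unfold eta
    positivity
  exact mul_nonneg (mul_nonneg hcoeff (abs_nonneg _)) (gauss_pos _).le

theorem continuous_Jker (lam p : ℝ) : Continuous (Jker lam p) := by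
  have := continuous_gauss
  unfold Jker
  fun_prop

theorem Jker_neg_neg (lam p q : ℝ) : Jker lam (-p) (-q) = Jker lam p q := by
  unfold Jker
  rw [← gauss_neg, ← abs_neg]
  ring_nf

theorem hasDerivAt_Jker (lam : ℝ) (hq : q < p) :
    HasDerivAt (Jker lam p)
      (((1 - lam) / 2 * ((1 + lam) / 2 * p - (1 - lam) / 2 * q) - 1 / (p - q)) * Jker lam p q)
      q := by
  have habs : HasDerivAt (fun q ↦ |q - p|) (-1) q :=
    (hasDerivAt_abs_neg (sub_neg.2 hq)).comp_sub_const q p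
  have harg : HasDerivAt (fun q ↦ (1 - lam) / 2 * q - (1 + lam) / 2 * p) ((1 - lam) / 2) q := by
    simpa using ((hasDerivAt_id q).const_mul ((1 - lam) / 2)).sub_const ((1 + lam) / 2 * p)
  refine ((habs.const_mul _).mul ((hasDerivAt_gauss _).comp q harg)).congr_deriv ?_
  have hpq : p - q ≠ 0 := (sub_pos.2 hq).ne'
  simp only [Jker, Function.comp_apply, abs_of_neg (sub_neg.2 hq)]
  field_simp
  ring

theorem one_le_neg_gauss_arg (hlam : 0 < lam) (hlam1 : lam ≤ 1) (hp : lam⁻¹ ≤ p) (hq : q ≤ lam⁻¹) :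
    1 ≤ (1 + lam) / 2 * p - (1 - lam) / 2 * q :=
  calc 1 = (1 + lam) / 2 * lam⁻¹ - (1 - lam) / 2 * lam⁻¹ := by field_simp; ring
    _ ≤ (1 + lam) / 2 * p - (1 - lam) / 2 * q := by gcongr

theorem sub_mul_neg_logDeriv_Jker_le (hlam : 0 < lam) (hlam1 : lam ≤ 1) (hp : lam⁻¹ ≤ p)
    (hq : q ≤ lam⁻¹) :
    (lam⁻¹ - q) * (1 / (p - q) - (1 - lam) / 2 * ((1 + lam) / 2 * p - (1 - lam) / 2 * q)) ≤
      1 - (1 - lam) / 2 * (lam⁻¹ - q) := by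
  have hfactor : (lam⁻¹ - q) / (p - q) ≤ 1 := div_le_one_of_le₀ (by linarith) (by linarith)
  have hgauss := mul_le_mul_of_nonneg_left (one_le_neg_gauss_arg hlam hlam1 hp hq)
    (mul_nonneg (sub_nonneg.2 hq) (by linarith : 0 ≤ (1 - lam) / 2))
  linear_combination hfactor + hgauss

theorem integral_sub_pow_mul_Jker_le {r : ℝ} (hlam : 0 < lam) (hlam1 : lam < 1) (hp : lam⁻¹ ≤ p)
    (hr : r ≤ lam⁻¹) (m : ℕ) :
    ∫ q in r..lam⁻¹, (lam⁻¹ - q) ^ m * Jker lam p q ≤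
      (m + 1).factorial * (2 / (1 - lam)) ^ m * ∫ q in r..lam⁻¹, Jker lam p q := by
  let negLogDeriv (q : ℝ) : ℝ :=
    1 / (p - q) - (1 - lam) / 2 * ((1 + lam) / 2 * p - (1 - lam) / 2 * q)
  have hnonneg (q : ℝ) : 0 ≤ Jker lam p q := Jker_nonneg (by linarith) p q
  have hcont : Continuous fun t ↦ Jker lam p (lam⁻¹ - t) :=
    (continuous_Jker lam p).comp (continuous_sub_left lam⁻¹)
  have hderiv (t : ℝ) (ht : t ∈ Set.Ioo 0 (lam⁻¹ - r)) :
      HasDerivAt (fun t ↦ Jker lam p (lam⁻¹ - t))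
        (negLogDeriv (lam⁻¹ - t) * Jker lam p (lam⁻¹ - t)) t :=
    ((hasDerivAt_Jker lam (by linarith [ht.1])).comp_const_sub lam⁻¹ t).congr_deriv (by ring)
  have hderiv_le (t : ℝ) (ht : t ∈ Set.Ioo 0 (lam⁻¹ - r)) :
      t * (negLogDeriv (lam⁻¹ - t) * Jker lam p (lam⁻¹ - t)) ≤
        (1 - (1 - lam) / 2 * t) * Jker lam p (lam⁻¹ - t) := by
    rw [← mul_assoc]
    refine mul_le_mul_of_nonneg_right ?_ (hnonneg _)
    simpa only [sub_sub_cancel] using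
      sub_mul_neg_logDeriv_Jker_le hlam hlam1.le hp (sub_le_self lam⁻¹ ht.1.le)
  have hmoment := integral_pow_mul_le_Gamma_mul (by norm_num) (by linarith) (sub_nonneg.2 hr)
    hcont.continuousOn (hnonneg _) hderiv hderiv_le m
  have hconst : Gamma (1 + 1 + m) / (Gamma (1 + 1) * ((1 - lam) / 2) ^ m) =
      (m + 1).factorial * (2 / (1 - lam)) ^ m := by
    rw [show (1 + 1 + m : ℝ) = (m + 1 : ℕ) + 1 by push_cast; ring, Gamma_nat_eq_factorial,
      one_add_one_eq_two, Gamma_two, one_mul, div_eq_mul_inv, ← inv_pow, inv_div]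
  have hreflect (g : ℝ → ℝ) : ∫ q in r..lam⁻¹, g q = ∫ t in 0..(lam⁻¹ - r), g (lam⁻¹ - t) := by
    simp
  simpa only [hreflect, sub_sub_cancel, hconst] using hmoment

theorem setIntegral_abs_weight_mul_Jker_abs {L : ℝ} (hL : 0 ≤ L) (lam p : ℝ) (w : ℝ → ℝ) :
    ∫ q in {q : ℝ | |q| ≤ L}, w |q| * Jker lam |p| q =
      ∫ q in {q : ℝ | |q| ≤ L}, w |q| * Jker lam p q := by
  simp only [setIntegral_abs_le_eq_intervalIntegral hL]
  rcases abs_choice p with hp | hp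
  · rw [hp]
  · rw [hp, ← neg_neg L, ← intervalIntegral.integral_comp_neg]
    simp only [neg_neg, abs_neg, Jker_neg_neg]

theorem setIntegral_sub_abs_pow_mul_Jker_le_of_lt_one (hlam : 0 < lam) (hlam1 : lam < 1)
    (hp : lam⁻¹ ≤ |p|) (m : ℕ) :
    ∫ q in {q : ℝ | |q| ≤ lam⁻¹}, (lam⁻¹ - |q|) ^ m * Jker lam p q ≤
      (m + 1).factorial * (2 / (1 - lam)) ^ m *
        ∫ q in {q : ℝ | |q| ≤ lam⁻¹}, Jker lam p q := by
  have hL : 0 ≤ lam⁻¹ := (inv_pos.2 hlam).le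
  have hmass := setIntegral_abs_weight_mul_Jker_abs hL lam p fun _ ↦ 1
  simp only [one_mul] at hmass
  rw [← setIntegral_abs_weight_mul_Jker_abs hL lam p fun x ↦ (lam⁻¹ - x) ^ m, ← hmass]
  simp only [setIntegral_abs_le_eq_intervalIntegral hL]
  have hcont := continuous_Jker lam |p|
  calc ∫ q in -lam⁻¹..lam⁻¹, (lam⁻¹ - |q|) ^ m * Jker lam |p| q
      ≤ ∫ q in -lam⁻¹..lam⁻¹, (lam⁻¹ - q) ^ m * Jker lam |p| q := by
        refine intervalIntegral.integral_mono_on (by linarith)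
          (Continuous.intervalIntegrable (by fun_prop) _ _)
          (Continuous.intervalIntegrable (by fun_prop) _ _) fun q hq ↦ ?_
        refine mul_le_mul_of_nonneg_right ?_ (Jker_nonneg (by linarith) _ _)
        exact pow_le_pow_left₀ (sub_nonneg.2 (abs_le.2 hq)) (by linarith [le_abs_self q]) m
    _ ≤ _ := integral_sub_pow_mul_Jker_le hlam hlam1 hp (by linarith) m

theorem setIntegral_sub_abs_pow_mul_Jker_le_pow_mul {L : ℝ} (hlam : -1 ≤ lam) (hL : 0 ≤ L)
    (p : ℝ) (m : ℕ) :
    ∫ q in {q : ℝ | |q| ≤ L}, (L - |q|) ^ m * Jker lam p q ≤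
      L ^ m * ∫ q in {q : ℝ | |q| ≤ L}, Jker lam p q := by
  have hcont := continuous_Jker lam p
  simp only [setIntegral_abs_le_eq_intervalIntegral hL]
  rw [← intervalIntegral.integral_const_mul]
  refine intervalIntegral.integral_mono_on (by linarith)
    (Continuous.intervalIntegrable (by fun_prop) _ _)
    (Continuous.intervalIntegrable (by fun_prop) _ _) fun q hq ↦ ?_
  refine mul_le_mul_of_nonneg_right ?_ (Jker_nonneg hlam _ _)
  exact pow_le_pow_left₀ (sub_nonneg.2 (abs_le.2 hq)) (sub_le_self _ (abs_nonneg q)) m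

end CollisionKernel

theorem stmt_8_general {lam p : ℝ} (hlam : 0 < lam) (hp : lam⁻¹ ≤ |p|) (m : ℕ) :
    ∫ q in {q : ℝ | |q| ≤ lam⁻¹}, (lam⁻¹ - |q|) ^ m * Jker lam p q ≤
      (m + 1).factorial * 4 ^ m * ∫ q in {q : ℝ | |q| ≤ lam⁻¹}, Jker lam p q := by
  have hmass : 0 ≤ ∫ q in {q : ℝ | |q| ≤ lam⁻¹}, Jker lam p q :=
    integral_nonneg fun q ↦ Jker_nonneg (by linarith) p q
  rcases le_total lam (1 / 2) with hsmall | hlarge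
  · refine (setIntegral_sub_abs_pow_mul_Jker_le_of_lt_one hlam (by linarith) hp m).trans ?_
    have hrate : 2 / (1 - lam) ≤ 4 := (div_le_iff₀ (by linarith)).2 (by linarith)
    have : 0 ≤ 2 / (1 - lam) := div_nonneg zero_le_two (by linarith)
    gcongr
  · have hL : 0 ≤ lam⁻¹ := (inv_pos.2 hlam).le
    refine (setIntegral_sub_abs_pow_mul_Jker_le_pow_mul (by linarith) hL p m).trans ?_
    refine mul_le_mul_of_nonneg_right ?_ hmass
    have hinv : lam⁻¹ ≤ 4 := (inv_le_comm₀ hlam (by norm_num)).2 (by linarith)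
    have hfactorial : (1 : ℝ) ≤ (m + 1).factorial := mod_cast (m + 1).factorial_pos
    calc lam⁻¹ ^ m ≤ 4 ^ m := by gcongr
      _ ≤ (m + 1).factorial * 4 ^ m := le_mul_of_one_le_left (by positivity) hfactorial

theorem stmt_8 :
    ∀ m : ℕ, 1 ≤ m → ∃ C : ℝ, 0 < C ∧ ∀ lam ∈ Set.Ioc (0 : ℝ) 1, ∀ p : ℝ,
      lam⁻¹ < |p| →
        (∫ p' in {p' : ℝ | |p'| ≤ lam⁻¹}, (lam⁻¹ - |p'|) ^ m * Jker lam p p') ≤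
          C * ∫ p' in {p' : ℝ | |p'| ≤ lam⁻¹}, Jker lam p p' :=
  fun m _ ↦ ⟨(m + 1).factorial * 4 ^ m, by positivity,
    fun _ hlam _ hp ↦ stmt_8_general hlam.1 hp.le m⟩
end

section
/- Let (X_t, P_t), t ≥ 0, be a solution of the Hamiltonian equations X'_t = P_t, P'_t = −V'(X_t), and assume P_0² > 4·sup_x V(x). Then: (1) for all t ≥ 0, |P_t − P_0| ≤ 2·(sup_x V(x))/|P_0|; and (2) for all t ≥ 0, |P_t − P_0 − (V(X_0) − V(X_t))/P_0| ≤ 2t·(sup_x |V'(x)|)·(sup_x V(x))/P_0². -/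
open Real

/-! By conservation of energy, `P² - P₀² = 2 (V(X₀) - V(X))` has absolute value at most `2M`, where
`M` bounds the variation of the potential along the trajectory. If `2M < P₀²`, the particle cannot
turn around, so `P` keeps the sign of `P₀` and `|P₀| ≤ |P + P₀|`; factoring `P² - P₀²` bounds
`|P - P₀|` by `2M / |P₀|`. The remainder `P - P₀ - (V(X₀) - V(X)) / P₀` vanishes initially and has
derivative `V'(X) (P - P₀) / P₀`, which the first bound controls, so the mean value inequality
concludes. -/

section Order

variable {R : Type*} [CommRing R] [LinearOrder R] [IsStrictOrderedRing R]

lemma abs_sub_mul_abs_le_abs_sq_sub_sq {a b : R} (hab : 0 ≤ a * b) :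
    |a - b| * |b| ≤ |a ^ 2 - b ^ 2| := by
  have h_le : |b| ≤ |a + b| := by
    rw [abs_add_eq_add_abs_iff a b |>.mpr (mul_nonneg_iff.mp hab)]
    exact le_add_of_nonneg_left (abs_nonneg a)
  calc |a - b| * |b| ≤ |a - b| * |a + b| := by gcongr
    _ = |a ^ 2 - b ^ 2| := by rw [← abs_mul, sq_sub_sq, mul_comm]

lemma mul_pos_of_isPreconnected_of_ne_zero [TopologicalSpace R] [OrderClosedTopology R]
    {α : Type*} [TopologicalSpace α] {s : Set α} {f : α → R} (hs : IsPreconnected s)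
    (hf : ContinuousOn f s) (hne : ∀ x ∈ s, f x ≠ 0) {x y : α} (hx : x ∈ s) (hy : y ∈ s) :
    0 < f x * f y := by
  have not_sign_change {a b : α} (ha : a ∈ s) (hb : b ∈ s) (hfa : f a < 0) : ¬ 0 < f b := by
    intro hfb
    obtain ⟨c, hc, hfc⟩ := hs.intermediate_value ha hb hf ⟨hfa.le, hfb.le⟩
    exact hne c hc hfc
  rcases (hne x hx).lt_or_gt with hfx | hfx <;> rcases (hne y hy).lt_or_gt with hfy | hfy
  · exact mul_pos_of_neg_of_neg hfx hfy
  · exact absurd hfy (not_sign_change hx hy hfx)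
  · exact absurd hfx (not_sign_change hy hx hfy)
  · exact mul_pos hfx hfy

end Order

lemma abs_sub_le_sSup_range_of_nonneg {ι : Type*} {f : ι → ℝ} (hf : ∀ i, 0 ≤ f i)
    (hbdd : BddAbove (Set.range f)) (i j : ι) : |f i - f j| ≤ sSup (Set.range f) :=
  abs_sub_le_of_nonneg_of_le (hf i) (le_ciSup hbdd i) (hf j) (le_ciSup hbdd j)

/-- The Hamiltonian `H(x, p) = p² / 2 + V(x)` of a unit-mass particle in the potential `V`. -/
noncomputable def hamiltonian (V : ℝ → ℝ) (x p : ℝ) : ℝ := p ^ 2 / 2 + V x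

/-- The curve `(X, P)` solves Hamilton's equations for `hamiltonian V` on the time set `s`.
Time derivatives are taken within `s`, so they are one-sided at an endpoint of an interval.
The potential is required to be differentiable along the trajectory, as `deriv V` would otherwise
be the junk value `0`. -/
structure IsHamiltonianTrajectory (V X P : ℝ → ℝ) (s : Set ℝ) : Prop where
  differentiableAt_potential : ∀ t ∈ s, DifferentiableAt ℝ V (X t)
  hasDerivWithinAt_position : ∀ t ∈ s, HasDerivWithinAt X (P t) s t
  hasDerivWithinAt_momentum : ∀ t ∈ s, HasDerivWithinAt P (-deriv V (X t)) s t

namespace IsHamiltonianTrajectory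

variable {V X P : ℝ → ℝ} {s : Set ℝ} {t t₀ : ℝ}

lemma continuousOn_momentum (h : IsHamiltonianTrajectory V X P s) : ContinuousOn P s :=
  fun t ht => (h.hasDerivWithinAt_momentum t ht).continuousWithinAt

lemma hasDerivWithinAt_potential (h : IsHamiltonianTrajectory V X P s) (ht : t ∈ s) :
    HasDerivWithinAt (fun τ => V (X τ)) (deriv V (X t) * P t) s t :=
  (h.differentiableAt_potential t ht).hasDerivAt.comp_hasDerivWithinAt t
    (h.hasDerivWithinAt_position t ht)

lemma hasDerivWithinAt_hamiltonian (h : IsHamiltonianTrajectory V X P s) (ht : t ∈ s) :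
    HasDerivWithinAt (fun τ => hamiltonian V (X τ) (P τ)) 0 s t := by
  have h_deriv := (((h.hasDerivWithinAt_momentum t ht).pow 2).div_const 2).add
    (h.hasDerivWithinAt_potential ht)
  refine h_deriv.congr_deriv ?_
  push_cast
  ring

lemma hamiltonian_eq (h : IsHamiltonianTrajectory V X P s) (hs : Convex ℝ s)
    (ht : t ∈ s) (ht₀ : t₀ ∈ s) : hamiltonian V (X t) (P t) = hamiltonian V (X t₀) (P t₀) := by
  have h_norm := hs.norm_image_sub_le_of_norm_hasDerivWithin_le (C := 0)
    (fun τ hτ => h.hasDerivWithinAt_hamiltonian hτ) (fun _ _ => norm_zero.le) ht₀ ht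
  rwa [zero_mul, norm_le_zero_iff, sub_eq_zero] at h_norm

lemma sq_momentum_sub_sq (h : IsHamiltonianTrajectory V X P s) (hs : Convex ℝ s)
    (ht : t ∈ s) (ht₀ : t₀ ∈ s) : P t ^ 2 - P t₀ ^ 2 = 2 * (V (X t₀) - V (X t)) := by
  have h_energy := h.hamiltonian_eq hs ht ht₀
  simp only [hamiltonian] at h_energy
  linarith

lemma mul_momentum_pos (h : IsHamiltonianTrajectory V X P s) (hs : Convex ℝ s) (ht₀ : t₀ ∈ s)
    (hbarrier : ∀ τ ∈ s, 2 * (V (X τ) - V (X t₀)) < P t₀ ^ 2) (ht : t ∈ s) :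
    0 < P t * P t₀ := by
  have momentum_ne_zero : ∀ τ ∈ s, P τ ≠ 0 := fun τ hτ => by
    rw [← sq_pos_iff]
    linarith [h.sq_momentum_sub_sq hs hτ ht₀, hbarrier τ hτ]
  exact mul_pos_of_isPreconnected_of_ne_zero hs.isPreconnected h.continuousOn_momentum
    momentum_ne_zero ht ht₀

lemma abs_momentum_sub_le {M : ℝ} (h : IsHamiltonianTrajectory V X P s) (hs : Convex ℝ s)
    (ht₀ : t₀ ∈ s) (hM : ∀ τ ∈ s, |V (X τ) - V (X t₀)| ≤ M) (hP : 2 * M < P t₀ ^ 2)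
    (ht : t ∈ s) : |P t - P t₀| ≤ 2 * M / |P t₀| := by
  have h_pos : 0 < P t * P t₀ := h.mul_momentum_pos hs ht₀
    (fun τ hτ => by linarith [le_of_abs_le (hM τ hτ)]) ht
  rw [le_div_iff₀ (abs_pos.mpr (right_ne_zero_of_mul h_pos.ne'))]
  calc |P t - P t₀| * |P t₀| ≤ |P t ^ 2 - P t₀ ^ 2| := abs_sub_mul_abs_le_abs_sq_sub_sq h_pos.le
    _ = 2 * |V (X t) - V (X t₀)| := by
      rw [h.sq_momentum_sub_sq hs ht ht₀, abs_mul, abs_two, abs_sub_comm]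
    _ ≤ 2 * M := by gcongr; exact hM t ht

lemma hasDerivWithinAt_momentum_remainder (h : IsHamiltonianTrajectory V X P s) (hP : P t₀ ≠ 0)
    (ht : t ∈ s) :
    HasDerivWithinAt (fun τ => P τ - P t₀ - (V (X t₀) - V (X τ)) / P t₀)
      (deriv V (X t) * (P t - P t₀) / P t₀) s t := by
  have h_deriv := ((h.hasDerivWithinAt_momentum t ht).sub_const (P t₀)).sub
    (((h.hasDerivWithinAt_potential ht).const_sub (V (X t₀))).div_const (P t₀))
  refine h_deriv.congr_deriv ?_
  field_simp
  ring

lemma abs_momentum_remainder_le {D ε : ℝ} (h : IsHamiltonianTrajectory V X P s) (hs : Convex ℝ s)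
    (ht₀ : t₀ ∈ s) (hP : P t₀ ≠ 0) (hD : ∀ τ ∈ s, |deriv V (X τ)| ≤ D)
    (hε : ∀ τ ∈ s, |P τ - P t₀| ≤ ε) (ht : t ∈ s) :
    |P t - P t₀ - (V (X t₀) - V (X t)) / P t₀| ≤ D * ε / |P t₀| * |t - t₀| := by
  have h_deriv_le : ∀ τ ∈ s, ‖deriv V (X τ) * (P τ - P t₀) / P t₀‖ ≤ D * ε / |P t₀| :=
    fun τ hτ => by
      have hD_nonneg : 0 ≤ D := (abs_nonneg _).trans (hD τ hτ)
      rw [norm_eq_abs, abs_div, abs_mul]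
      gcongr
      exacts [hD τ hτ, hε τ hτ]
  simpa using hs.norm_image_sub_le_of_norm_hasDerivWithin_le
    (fun τ hτ => h.hasDerivWithinAt_momentum_remainder hP hτ) h_deriv_le ht₀ ht

end IsHamiltonianTrajectory

theorem stmt_19_general {V X P : ℝ → ℝ} {s : Set ℝ} {t₀ M D : ℝ}
    (h : IsHamiltonianTrajectory V X P s) (hs : Convex ℝ s) (ht₀ : t₀ ∈ s)
    (hM : ∀ t ∈ s, |V (X t) - V (X t₀)| ≤ M) (hD : ∀ t ∈ s, |deriv V (X t)| ≤ D)
    (hP : 2 * M < P t₀ ^ 2) :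
    (∀ t ∈ s, |P t - P t₀| ≤ 2 * M / |P t₀|) ∧
    (∀ t ∈ s, |P t - P t₀ - (V (X t₀) - V (X t)) / P t₀| ≤
      2 * |t - t₀| * D * M / P t₀ ^ 2) := by
  have h_first : ∀ t ∈ s, |P t - P t₀| ≤ 2 * M / |P t₀| :=
    fun t ht => h.abs_momentum_sub_le hs ht₀ hM hP ht
  have hM_nonneg : 0 ≤ M := (abs_nonneg _).trans (hM t₀ ht₀)
  have hP_ne : P t₀ ≠ 0 := sq_pos_iff.mp (by linarith)
  refine ⟨h_first, fun t ht => ?_⟩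
  calc |P t - P t₀ - (V (X t₀) - V (X t)) / P t₀|
      ≤ D * (2 * M / |P t₀|) / |P t₀| * |t - t₀| :=
        h.abs_momentum_remainder_le hs ht₀ hP_ne hD h_first ht
    _ = 2 * |t - t₀| * D * M / P t₀ ^ 2 := by
        rw [← sq_abs (P t₀)]
        ring

theorem stmt_19 (V : ℝ → ℝ) (hV : ContDiff ℝ 1 V) (hVpos : ∀ x, 0 ≤ V x)
    (hVbdd : BddAbove (Set.range V))
    (hV'bdd : BddAbove (Set.range fun x => |deriv V x|))
    (X P : ℝ → ℝ)
    (hX : ∀ t : ℝ, 0 ≤ t → HasDerivAt X (P t) t)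
    (hP : ∀ t : ℝ, 0 ≤ t → HasDerivAt P (-(deriv V (X t))) t)
    (hP0 : (P 0) ^ 2 > 4 * sSup (Set.range V)) :
    (∀ t : ℝ, 0 ≤ t → |P t - P 0| ≤ 2 * sSup (Set.range V) / |P 0|) ∧
    (∀ t : ℝ, 0 ≤ t →
      |P t - P 0 - (V (X 0) - V (X t)) / P 0| ≤
        2 * t * sSup (Set.range fun x => |deriv V x|) * sSup (Set.range V) / (P 0) ^ 2) := by
  have h_traj : IsHamiltonianTrajectory V X P (Set.Ici 0) :=
    ⟨fun t _ => hV.differentiable one_ne_zero (X t), fun t ht => (hX t ht).hasDerivWithinAt,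
      fun t ht => (hP t ht).hasDerivWithinAt⟩
  have hP0' : 2 * sSup (Set.range V) < P 0 ^ 2 := by
    linarith [Real.sSup_nonneg (Set.forall_mem_range.mpr hVpos)]
  refine (stmt_19_general h_traj (convex_Ici 0) Set.self_mem_Ici
    (fun t _ => abs_sub_le_sSup_range_of_nonneg hVpos hVbdd (X t) (X 0))
    (fun t _ => le_csSup hV'bdd ⟨X t, rfl⟩) hP0').imp_right fun h_second t ht => ?_
  simpa only [sub_zero, abs_of_nonneg ht] using h_second t ht
end
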